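/- Let Λ, Λ' ⊆ ℕ₀^d be finite lower sets. Then the sumset Λ ⊕ Λ' is a lower set, and M(Λ ⊕ Λ') = M(Λ) ⊕ M(Λ'), where the right-hand sumset is taken in ℤ^d. -/

import Mathlib

open Pointwise

/-- A set `Λ ⊆ ℕ₀^d` is lower (downward closed). -/
def IsLower {d : ℕ} (Λ : Set (Fin d → ℕ)) : Prop :=
  ∀ k ∈ Λ, ∀ h : Fin d → ℕ, (∀ j, h j ≤ k j) → h ∈ Λ

/-- The mirrored set `M(Λ) = {h ∈ ℤ^d : |h| ∈ Λ}`. -/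
def mirror {d : ℕ} (Λ : Set (Fin d → ℕ)) : Set (Fin d → ℤ) :=
  {h | (fun j => (h j).natAbs) ∈ Λ}

/-- Integer dot product. -/
def dotZ {d : ℕ} (h z : Fin d → ℤ) : ℤ := ∑ j, h j * z j

/-- Cast a multi-index in `ℕ₀^d` to `ℤ^d`. -/
def natCast {d : ℕ} (h : Fin d → ℕ) : Fin d → ℤ := fun j => (h j : ℤ)

/-- `s` is a component-wise sign flip of `h`. -/
def IsSignFlip {d : ℕ} (h : Fin d → ℕ) (s : Fin d → ℤ) : Prop :=
  ∀ j, (s j).natAbs = h j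

/-- Plan 0 admissibility: `h·z ≢ 0 (mod n)` for all nonzero `h ∈ M(Λ)`. -/
def Plan0 {d : ℕ} (Λ : Set (Fin d → ℕ)) (n : ℕ) (z : Fin d → ℤ) : Prop :=
  ∀ h ∈ mirror Λ, h ≠ 0 → ¬ (dotZ h z ≡ 0 [ZMOD (n : ℤ)])

/-- Plan A admissibility: `h·z ≢ h'·z (mod n)` for all distinct `h, h' ∈ M(Λ)`. -/
def PlanA {d : ℕ} (Λ : Set (Fin d → ℕ)) (n : ℕ) (z : Fin d → ℤ) : Prop :=
  ∀ h ∈ mirror Λ, ∀ h' ∈ mirror Λ, h ≠ h' →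
    ¬ (dotZ h z ≡ dotZ h' z [ZMOD (n : ℤ)])

/-- Plan B admissibility. -/
def PlanB {d : ℕ} (Λ : Set (Fin d → ℕ)) (n : ℕ) (z : Fin d → ℤ) : Prop :=
  ∀ h ∈ Λ, ∀ h' ∈ Λ, ∀ s : Fin d → ℤ, IsSignFlip h s → s ≠ natCast h' →
    ¬ (dotZ s z ≡ dotZ (natCast h') z [ZMOD (n : ℤ)])

/-- Plan C admissibility. -/
def PlanC {d : ℕ} (Λ : Set (Fin d → ℕ)) (n : ℕ) (z : Fin d → ℤ) : Prop :=
  ∀ h ∈ Λ, ∀ h' ∈ Λ, h ≠ h' → ∀ s : Fin d → ℤ, IsSignFlip h s →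
    ¬ (dotZ s z ≡ dotZ (natCast h') z [ZMOD (n : ℤ)])

theorem sumset_lower_and_mirror_sum {d : ℕ} (Λ Λ' : Set (Fin d → ℕ))
    (hfin : Λ.Finite) (hfin' : Λ'.Finite) (hlow : IsLower Λ) (hlow' : IsLower Λ') :
    IsLower (Λ + Λ') ∧ mirror (Λ + Λ') = mirror Λ + mirror Λ' := by
  have hL : IsLower (Λ + Λ') := by
    rintro k ⟨a, ha, b, hb, rfl⟩ h hk
    refine Set.mem_add.2 ⟨fun j => min (h j) (a j), hlow a ha _ (fun j => min_le_right _ _),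
      fun j => h j - min (h j) (a j), hlow' b hb _ (fun j => ?_), ?_⟩
    · have := hk j
      simp only [Pi.add_apply] at this
      omega
    · funext j
      simp only [Pi.add_apply]
      omega
  refine ⟨hL, ?_⟩
  ext h
  constructor
  · rintro ⟨a, ha, b, hb, hab⟩
    have hj : ∀ j, a j + b j = (h j).natAbs := fun j => congrFun hab j
    refine Set.mem_add.2 ⟨fun j => if 0 ≤ h j then (a j : ℤ) else -(a j : ℤ), ?_,
      fun j => if 0 ≤ h j then (b j : ℤ) else -(b j : ℤ), ?_, ?_⟩
    · refine hlow a ha _ (fun j => ?_)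
      dsimp only
      split_ifs <;> omega
    · refine hlow' b hb _ (fun j => ?_)
      dsimp only
      split_ifs <;> omega
    · funext j
      have := hj j
      simp only [Pi.add_apply]
      split_ifs <;> omega
  · rintro ⟨a, ha, b, hb, rfl⟩
    refine hL _ (Set.add_mem_add ha hb) _ (fun j => ?_)
    simp only [Pi.add_apply]
    omega
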